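/- Let Λ and Σ be symmetric positive definite n×n real matrices, σ > 0, σ_v > 0, μ ∈ ℝⁿ, distinct inducing inputs w̆₁, …, w̆_M ∈ ℝⁿ, training inputs w₁, …, w_N ∈ ℝⁿ, and α ∈ ℝᴹ. Define κ_d(w, w′) = σ² exp(−(1/2)(w−w′)ᵀΛ⁻¹(w−w′)), the kernel slice k(w)_τ = κ_d(w, w̆_τ), the M×M matrix K with [K]_{τ,τ̃} = κ_d(w̆_τ, w̆_{τ̃}) + δ_{τ,τ̃}σ_v², the M×N matrix B with [B]_{τ,n} = κ_d(w̆_τ, w_n), and S = K + σ_v^{−2} B Bᵀ; assume K and S are invertible. Define μ̆(w) = αᵀ k(w) and σ̆²(w) = σ² + σ_v² − k(w)ᵀ(K⁻¹ − S⁻¹)k(w), and assume σ̆²(w) ≥ 0 for all w ∈ ℝⁿ. Let ν be the probability measure on ℝⁿ with Lebesgue density ρ_{μ,Σ}, and let η = ν.bind (w ↦ gaussianReal (μ̆(w)) (σ̆²(w))). Then Var(η) = σ² + σ_v² + αᵀ L α − (αᵀ l)² − Tr((K⁻¹ − S⁻¹) L), where l ∈ ℝᴹ has entries l_τ = σ²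 det(Λ⁻¹Σ + I)^{−1/2} exp(−(1/2)(μ−w̆_τ)ᵀ(Λ+Σ)⁻¹(μ−w̆_τ)) and the M×M matrix L has entries [L]_{τ,τ̃} = σ⁴ det(2Λ⁻¹Σ + I)^{−1/2} exp(−(1/4)(w̆_τ−w̆_{τ̃})ᵀΛ⁻¹(w̆_τ−w̆_{τ̃})) exp(−(1/2)(q_{τ,τ̃}−μ)ᵀ(Λ/2 + Σ)⁻¹(q_{τ,τ̃}−μ)) with q_{τ,τ̃} = (w̆_τ + w̆_{τ̃})/2, and Var(η) = ∫ z² dη − (∫ z dη)². -/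

import Mathlib

/-!
Conditionally on `w` the output has mean `m w = αᵀ k(w)` and variance `sv w`, so the mixture has
mean `E[m]` and second moment `E[sv + m²]` (`mixture_moments`). Both integrands are polynomials of
degree at most two in the kernel slices `k_τ`, so everything reduces to `E[k_τ] = l_τ` and
`E[k_τ k_τ'] = L_ττ'` for `w ~ N(μ, Sig)`: the quadratic form of `m²` gives `αᵀ L α`, and that of
`sv` gives the trace of `(K⁻¹ - S⁻¹) L`.

The two kernel expectations are instances of `integral_gaussDensity_mul_exp`, the integral of a
Gaussian density against a Gaussian bump. It follows by completing the square
(`quadratic_complete_square`) and evaluating the remaining Gaussian integral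
(`integrable_integral_exp_quadratic`). For `L`, the product of two slices is first rewritten as
one bump of shape `Λ / 2` centred at the midpoint (`seKernel_mul`).
-/

open MeasureTheory ProbabilityTheory Matrix
open scoped Matrix NNReal

/-- The Gaussian probability density on `ℝⁿ` with mean `μ` and covariance `S`. -/
noncomputable def gaussDensity {n : ℕ} (μ : Fin n → ℝ) (S : Matrix (Fin n) (Fin n) ℝ)
    (w : Fin n → ℝ) : ℝ :=
  (2 * Real.pi) ^ (-(n : ℝ) / 2) * S.det ^ (-(1 : ℝ) / 2) *
    Real.exp (-(1 / 2) * ((w - μ) ⬝ᵥ (S⁻¹ *ᵥ (w - μ))))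

/-- The squared-exponential kernel with signal variance `σ²` and length-scale matrix `Λ`. -/
noncomputable def seKernel {n : ℕ} (σ : ℝ) (Λ : Matrix (Fin n) (Fin n) ℝ)
    (w w' : Fin n → ℝ) : ℝ :=
  σ ^ 2 * Real.exp (-(1 / 2) * ((w - w') ⬝ᵥ (Λ⁻¹ *ᵥ (w - w'))))

/-! ### Gaussian integrals -/

lemma posDef_exists_factor {n : ℕ} {P : Matrix (Fin n) (Fin n) ℝ} (hP : P.PosDef) :
    ∃ R : Matrix (Fin n) (Fin n) ℝ, P = Rᵀ * R ∧ R.det ≠ 0 := by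
  open scoped MatrixOrder in
  obtain ⟨R, hR⟩ := CStarAlgebra.nonneg_iff_eq_star_mul_self.1 hP.posSemidef.nonneg
  have hR' : P = Rᵀ * R := by
    rw [hR, Matrix.star_eq_conjTranspose, Matrix.conjTranspose_eq_transpose_of_trivial]
  refine ⟨R, hR', fun h => ?_⟩
  have := hP.det_pos
  rw [hR', Matrix.det_mul, h, mul_zero] at this
  exact lt_irrefl _ this

lemma exp_neg_half_dotProduct_self {n : ℕ} (x : Fin n → ℝ) :
    Real.exp (-(1 / 2) * (x ⬝ᵥ x)) = ∏ i, Real.exp (-(1 / 2) * x i ^ 2) := by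
  rw [← Real.exp_sum, dotProduct, Finset.mul_sum]
  simp [pow_two]

/-- The unnormalised `n`-dimensional Gaussian integral. Factoring `P = RᵀR` and substituting `x = R w`
turns the integrand into a product of one-dimensional Gaussians, at the price of `|det R|⁻¹`. -/
lemma integrable_integral_exp_quadratic {n : ℕ} {P : Matrix (Fin n) (Fin n) ℝ} (hP : P.PosDef)
    (m : Fin n → ℝ) :
    Integrable (fun w : Fin n → ℝ => Real.exp (-(1 / 2) * ((w - m) ⬝ᵥ (P *ᵥ (w - m))))) ∧
    ∫ w : Fin n → ℝ, Real.exp (-(1 / 2) * ((w - m) ⬝ᵥ (P *ᵥ (w - m))))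
      = (2 * Real.pi) ^ ((n : ℝ) / 2) * P.det ^ (-(1 : ℝ) / 2) := by
  obtain ⟨R, rfl, hR⟩ := posDef_exists_factor hP
  let g : (Fin n → ℝ) → ℝ := fun x => Real.exp (-(1 / 2) * (x ⬝ᵥ x))
  have hg : ∀ w : Fin n → ℝ, Real.exp (-(1 / 2) * (w ⬝ᵥ ((Rᵀ * R) *ᵥ w))) = g (toLin' R w) := by
    intro w
    simp only [g, Matrix.toLin'_apply]
    rw [← Matrix.mulVec_mulVec, Matrix.dotProduct_mulVec, Matrix.vecMul_transpose]
  have hgc : Continuous g := by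
    simp only [g, dotProduct]; fun_prop
  have hRm : Measurable (toLin' R) := (LinearMap.continuous_of_finiteDimensional _).measurable
  have hgi : Integrable g := by
    simp only [g, exp_neg_half_dotProduct_self]
    exact Integrable.fintype_prod (f := fun _ x => Real.exp (-(1 / 2) * x ^ 2))
      fun _ => integrable_exp_neg_mul_sq (by norm_num)
  have hgI : ∫ x, g x = (2 * Real.pi) ^ ((n : ℝ) / 2) := by
    simp only [g, exp_neg_half_dotProduct_self]
    rw [integral_fintype_prod_volume_eq_pow (fun x : ℝ => Real.exp (-(1 / 2) * x ^ 2)),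
      integral_gaussian, Fintype.card_fin, Real.sqrt_eq_rpow, ← Real.rpow_mul_natCast (by positivity)]
    congr 1 <;> ring
  have hmap := Real.map_matrix_volume_pi_eq_smul_volume_pi hR
  constructor
  · refine Integrable.comp_sub_right
      (f := fun w : Fin n → ℝ => Real.exp (-(1 / 2) * (w ⬝ᵥ ((Rᵀ * R) *ᵥ w)))) ?_ m
    simp only [hg]
    refine Integrable.comp_measurable (g := g) ?_ hRm
    rw [hmap]
    exact hgi.smul_measure ENNReal.ofReal_ne_top
  · rw [integral_sub_right_eq_self
      (fun w : Fin n → ℝ => Real.exp (-(1 / 2) * (w ⬝ᵥ ((Rᵀ * R) *ᵥ w)))) m]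
    simp only [hg]
    rw [← integral_map hRm.aemeasurable hgc.aestronglyMeasurable, hmap, integral_smul_measure, hgI,
      ENNReal.toReal_ofReal (abs_nonneg _), smul_eq_mul, mul_comm, Matrix.det_mul,
      Matrix.det_transpose, neg_div, Real.rpow_neg (mul_self_nonneg _), ← Real.sqrt_eq_rpow,
      Real.sqrt_mul_self_eq_abs, abs_inv]

lemma gaussDensity_nonneg {n : ℕ} (μ : Fin n → ℝ) {S : Matrix (Fin n) (Fin n) ℝ} (hS : S.PosDef)
    (w : Fin n → ℝ) : 0 ≤ gaussDensity μ S w := by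
  have := hS.det_pos
  unfold gaussDensity
  positivity

lemma continuous_gaussDensity {n : ℕ} (μ : Fin n → ℝ) (S : Matrix (Fin n) (Fin n) ℝ) :
    Continuous (gaussDensity μ S) := by
  unfold gaussDensity dotProduct mulVec dotProduct
  fun_prop

lemma continuous_seKernel {n : ℕ} (σ : ℝ) (Λ : Matrix (Fin n) (Fin n) ℝ) (c : Fin n → ℝ) :
    Continuous (fun w => seKernel σ Λ w c) := by
  unfold seKernel dotProduct mulVec dotProduct
  fun_prop

lemma integrable_gaussDensity {n : ℕ} (μ : Fin n → ℝ) {S : Matrix (Fin n) (Fin n) ℝ}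
    (hS : S.PosDef) : Integrable (gaussDensity μ S) :=
  (integrable_integral_exp_quadratic hS.inv μ).1.const_mul _

lemma integral_gaussDensity {n : ℕ} (μ : Fin n → ℝ) {S : Matrix (Fin n) (Fin n) ℝ}
    (hS : S.PosDef) : ∫ w, gaussDensity μ S w = 1 := by
  unfold gaussDensity
  have h := hS.det_pos
  rw [integral_const_mul, (integrable_integral_exp_quadratic hS.inv μ).2, Matrix.det_nonsing_inv,
    Ring.inverse_eq_inv', Real.inv_rpow h.le, neg_div, Real.rpow_neg (by positivity)]
  have := Real.rpow_pos_of_pos (Real.two_pi_pos) ((n : ℝ) / 2)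
  have := Real.rpow_pos_of_pos h (-(1 : ℝ) / 2)
  field_simp

/-- Completing the square in the sum of two quadratic forms centred at `μ` and `c`: the remainder is
governed by the parallel sum `(A⁻¹ + B⁻¹)⁻¹ = A - A (A + B)⁻¹ A`. -/
lemma quadratic_complete_square {n : ℕ} {A B : Matrix (Fin n) (Fin n) ℝ}
    (hA : A.PosDef) (hB : B.PosDef) (w μ c : Fin n → ℝ) :
    (w - μ) ⬝ᵥ (B *ᵥ (w - μ)) + (w - c) ⬝ᵥ (A *ᵥ (w - c)) =
      (w - (μ + (A + B)⁻¹ *ᵥ (A *ᵥ (c - μ)))) ⬝ᵥ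
        ((A + B) *ᵥ (w - (μ + (A + B)⁻¹ *ᵥ (A *ᵥ (c - μ))))) +
      (μ - c) ⬝ᵥ ((A⁻¹ + B⁻¹)⁻¹ *ᵥ (μ - c)) := by
  have hAt : Aᵀ = A := by simpa [Matrix.IsHermitian] using hA.isHermitian
  have hP := hA.add hB
  have hPt : (A + B)ᵀ = A + B := by simpa [Matrix.IsHermitian] using hP.isHermitian
  have hPu : IsUnit (A + B).det := hP.det_pos.ne'.isUnit
  have hAu : IsUnit A.det := hA.det_pos.ne'.isUnit
  have hBu : IsUnit B.det := hB.det_pos.ne'.isUnit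
  -- Here `A - A (A + B)⁻¹ A = A (A + B)⁻¹ B`, which visibly inverts `B⁻¹ (A + B) A⁻¹ = A⁻¹ + B⁻¹`.
  have hinv : (A⁻¹ + B⁻¹)⁻¹ = A - A * (A + B)⁻¹ * A := by
    apply Matrix.inv_eq_right_inv
    have e : A - A * (A + B)⁻¹ * A = A * (A + B)⁻¹ * B := by
      have : A * (A + B)⁻¹ * (A + B) = A := by
        rw [Matrix.mul_assoc, Matrix.nonsing_inv_mul _ hPu, Matrix.mul_one]
      rw [Matrix.mul_add] at this
      rw [← eq_sub_iff_add_eq'] at this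
      exact this.symm
    have e2 : A⁻¹ + B⁻¹ = B⁻¹ * (A + B) * A⁻¹ := by
      rw [Matrix.mul_add, Matrix.add_mul, Matrix.nonsing_inv_mul _ hBu, Matrix.one_mul,
        Matrix.mul_assoc, Matrix.mul_nonsing_inv _ hAu, Matrix.mul_one, add_comm]
    rw [e, e2]
    calc B⁻¹ * (A + B) * A⁻¹ * (A * (A + B)⁻¹ * B)
        = B⁻¹ * ((A + B) * (A⁻¹ * A) * (A + B)⁻¹) * B := by simp only [Matrix.mul_assoc]
      _ = 1 := by
        rw [Matrix.nonsing_inv_mul _ hAu, Matrix.mul_one, Matrix.mul_nonsing_inv _ hPu,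
          Matrix.mul_one, Matrix.nonsing_inv_mul _ hBu]
  obtain ⟨d, rfl⟩ : ∃ d, c = μ + d := ⟨c - μ, by simp⟩
  obtain ⟨v, rfl⟩ : ∃ v, w = μ + v := ⟨w - μ, by simp⟩
  rw [hinv]
  have e1 : μ + v - μ = v := by simp
  have e2 : μ + v - (μ + d) = v - d := by simp
  have e3 : μ + d - μ = d := by simp
  have e4 : μ - (μ + d) = -d := by simp
  rw [e1, e2, e3, e4, add_sub_add_left_eq_sub]
  have hsymP : ∀ x y, x ⬝ᵥ ((A + B) *ᵥ y) = y ⬝ᵥ ((A + B) *ᵥ x) := by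
    intro x y
    rw [Matrix.dotProduct_mulVec, ← Matrix.mulVec_transpose, hPt, dotProduct_comm]
  have hsymA : ∀ x y, x ⬝ᵥ (A *ᵥ y) = y ⬝ᵥ (A *ᵥ x) := by
    intro x y
    rw [Matrix.dotProduct_mulVec, ← Matrix.mulVec_transpose, hAt, dotProduct_comm]
  set u := (A + B)⁻¹ *ᵥ (A *ᵥ d) with hu
  have hPuv : (A + B) *ᵥ u = A *ᵥ d := by
    rw [hu, Matrix.mulVec_mulVec, Matrix.mul_nonsing_inv _ hPu, Matrix.one_mulVec]
  have hAu' : (A * (A + B)⁻¹ * A) *ᵥ d = A *ᵥ u := by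
    rw [hu, Matrix.mulVec_mulVec, Matrix.mulVec_mulVec, Matrix.mul_assoc]
  have h1 := hsymP u v
  have h2 := hsymA v d
  have h3 := hsymA u d
  rw [hPuv] at h1
  simp only [Matrix.mulVec_sub, Matrix.mulVec_neg, dotProduct_sub, sub_dotProduct, neg_dotProduct,
    dotProduct_neg, Matrix.sub_mulVec, hPuv, hAu']
  simp only [Matrix.add_mulVec, dotProduct_add] at h1 ⊢
  linarith

/-- The expectation under `N(μ, Sig)` of an unnormalised Gaussian bump with centre `c` and shape `Γ`.
This single formula yields both `l` (with `Γ = Λ`) and `L` (with `Γ = Λ / 2`). -/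
lemma integral_gaussDensity_mul_exp {n : ℕ} {Γ Sig : Matrix (Fin n) (Fin n) ℝ}
    (hΓ : Γ.PosDef) (hSig : Sig.PosDef) (μ c : Fin n → ℝ) :
    ∫ w, gaussDensity μ Sig w * Real.exp (-(1 / 2) * ((w - c) ⬝ᵥ (Γ⁻¹ *ᵥ (w - c)))) =
      (Γ⁻¹ * Sig + 1).det ^ (-(1 : ℝ) / 2) *
        Real.exp (-(1 / 2) * ((μ - c) ⬝ᵥ ((Γ + Sig)⁻¹ *ᵥ (μ - c)))) := by
  have hd := hSig.det_pos
  have hPd := (hΓ.inv.add hSig.inv).det_pos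
  have hΓu : IsUnit Γ.det := hΓ.det_pos.ne'.isUnit
  have hSu : IsUnit Sig.det := hSig.det_pos.ne'.isUnit
  have hdet : (Γ⁻¹ * Sig + 1).det = (Γ⁻¹ + Sig⁻¹).det * Sig.det := by
    rw [← Matrix.det_mul, Matrix.add_mul, Matrix.nonsing_inv_mul _ hSu]
  have key : ∀ w, gaussDensity μ Sig w * Real.exp (-(1 / 2) * ((w - c) ⬝ᵥ (Γ⁻¹ *ᵥ (w - c)))) =
      (2 * Real.pi) ^ (-(n : ℝ) / 2) * Sig.det ^ (-(1 : ℝ) / 2) *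
      Real.exp (-(1 / 2) * ((μ - c) ⬝ᵥ ((Γ + Sig)⁻¹ *ᵥ (μ - c)))) *
      Real.exp (-(1 / 2) * ((w - (μ + (Γ⁻¹ + Sig⁻¹)⁻¹ *ᵥ (Γ⁻¹ *ᵥ (c - μ)))) ⬝ᵥ
        ((Γ⁻¹ + Sig⁻¹) *ᵥ (w - (μ + (Γ⁻¹ + Sig⁻¹)⁻¹ *ᵥ (Γ⁻¹ *ᵥ (c - μ))))))) := by
    intro w
    have h := quadratic_complete_square hΓ.inv hSig.inv w μ c
    rw [Matrix.nonsing_inv_nonsing_inv _ hΓu, Matrix.nonsing_inv_nonsing_inv _ hSu] at h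
    unfold gaussDensity
    rw [mul_assoc _ (Real.exp _) (Real.exp _), ← Real.exp_add, mul_assoc _ (Real.exp _) (Real.exp _),
      ← Real.exp_add, ← mul_add, ← mul_add, h, add_comm]
  simp only [key]
  rw [integral_const_mul, (integrable_integral_exp_quadratic (hΓ.inv.add hSig.inv) _).2, hdet,
    Real.mul_rpow hPd.le hd.le, neg_div, Real.rpow_neg (by positivity)]
  have := Real.rpow_pos_of_pos (Real.two_pi_pos) ((n : ℝ) / 2)
  field_simp

/-! ### The input distribution -/

lemma isProbabilityMeasure_withDensity_gaussDensity {n : ℕ} (μ : Fin n → ℝ)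
    {S : Matrix (Fin n) (Fin n) ℝ} (hS : S.PosDef) :
    IsProbabilityMeasure
      ((volume : Measure (Fin n → ℝ)).withDensity
        fun w => ENNReal.ofReal (gaussDensity μ S w)) := by
  refine ⟨?_⟩
  rw [withDensity_apply _ MeasurableSet.univ, Measure.restrict_univ,
    ← ofReal_integral_eq_lintegral_ofReal (integrable_gaussDensity μ hS)
    (.of_forall (gaussDensity_nonneg μ hS)), integral_gaussDensity μ hS, ENNReal.ofReal_one]

lemma integral_withDensity_gaussDensity {n : ℕ} (μ : Fin n → ℝ)
    {S : Matrix (Fin n) (Fin n) ℝ} (hS : S.PosDef) (f : (Fin n → ℝ) → ℝ) :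
    ∫ w, f w ∂((volume : Measure (Fin n → ℝ)).withDensity
        fun w => ENNReal.ofReal (gaussDensity μ S w)) = ∫ w, gaussDensity μ S w * f w := by
  rw [integral_withDensity_eq_integral_toReal_smul
    (continuous_gaussDensity μ S).measurable.ennreal_ofReal (by simp)]
  simp [ENNReal.toReal_ofReal (gaussDensity_nonneg μ hS _)]

/-! ### Expectations of kernel slices -/

lemma seKernel_nonneg {n : ℕ} (σ : ℝ) (Λ : Matrix (Fin n) (Fin n) ℝ) (w c : Fin n → ℝ) :
    0 ≤ seKernel σ Λ w c := by
  unfold seKernel; positivity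

lemma seKernel_le {n : ℕ} (σ : ℝ) {Λ : Matrix (Fin n) (Fin n) ℝ} (hΛ : Λ.PosDef)
    (w c : Fin n → ℝ) : seKernel σ Λ w c ≤ σ ^ 2 := by
  have h : 0 ≤ (w - c) ⬝ᵥ (Λ⁻¹ *ᵥ (w - c)) := by
    simpa using hΛ.inv.posSemidef.dotProduct_mulVec_nonneg (w - c)
  unfold seKernel
  exact mul_le_of_le_one_right (sq_nonneg σ) (Real.exp_le_one_iff.2 (by linarith))

lemma inv_half_smul {n : ℕ} {Λ : Matrix (Fin n) (Fin n) ℝ} (hΛ : Λ.PosDef) :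
    ((2 : ℝ)⁻¹ • Λ)⁻¹ = (2 : ℝ) • Λ⁻¹ := by
  apply Matrix.inv_eq_right_inv
  rw [Matrix.smul_mul, Matrix.mul_smul, Matrix.mul_nonsing_inv _ hΛ.det_pos.ne'.isUnit, smul_smul]
  norm_num

/-- The product of two squared-exponential slices is a constant times one Gaussian bump of shape
`Λ / 2` centred at the midpoint of the two centres (parallelogram identity for `Λ⁻¹`). -/
lemma seKernel_mul {n : ℕ} (σ : ℝ) {Λ : Matrix (Fin n) (Fin n) ℝ} (hΛ : Λ.PosDef)
    (w a b : Fin n → ℝ) :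
    seKernel σ Λ w a * seKernel σ Λ w b =
      σ ^ 4 * Real.exp (-(1 / 4) * ((a - b) ⬝ᵥ (Λ⁻¹ *ᵥ (a - b)))) *
        Real.exp (-(1 / 2) * ((w - (1 / 2 : ℝ) • (a + b)) ⬝ᵥ
          (((2 : ℝ)⁻¹ • Λ)⁻¹ *ᵥ (w - (1 / 2 : ℝ) • (a + b))))) := by
  have hs : (Λ⁻¹)ᵀ = Λ⁻¹ := by simpa [Matrix.IsHermitian] using hΛ.inv.isHermitian
  have hsym : ∀ x y, x ⬝ᵥ (Λ⁻¹ *ᵥ y) = y ⬝ᵥ (Λ⁻¹ *ᵥ x) := by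
    intro x y
    rw [Matrix.dotProduct_mulVec, ← Matrix.mulVec_transpose, hs, dotProduct_comm]
  -- In the variables `x = w - a`, `y = w - b` this is `|x|² + |y|² = |x - y|² / 2 + |x + y|² / 2`.
  obtain ⟨x, rfl⟩ : ∃ x, a = w - x := ⟨w - a, by simp⟩
  obtain ⟨y, rfl⟩ : ∃ y, b = w - y := ⟨w - b, by simp⟩
  have e1 : w - (1 / 2 : ℝ) • (w - x + (w - y)) = (1 / 2 : ℝ) • (x + y) := by
    ext i; simp; ring
  have e2 : w - x - (w - y) = y - x := by abel
  have h := hsym x y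
  rw [e1, e2, inv_half_smul hΛ]
  unfold seKernel
  rw [mul_mul_mul_comm, ← Real.exp_add, mul_assoc _ (Real.exp _) (Real.exp _), ← Real.exp_add,
    sub_sub_cancel, sub_sub_cancel]
  congr 1
  · ring
  · congr 1
    simp only [Matrix.smul_mulVec, Matrix.mulVec_smul, dotProduct_smul, smul_dotProduct,
      Matrix.mulVec_sub, Matrix.mulVec_add, dotProduct_sub, sub_dotProduct, dotProduct_add,
      add_dotProduct, smul_eq_mul]
    rw [h]; ring

lemma integral_seKernel {n : ℕ} {Λ Sig : Matrix (Fin n) (Fin n) ℝ}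
    (hΛ : Λ.PosDef) (hSig : Sig.PosDef) (σ : ℝ) (μ c : Fin n → ℝ) :
    ∫ w, seKernel σ Λ w c ∂((volume : Measure (Fin n → ℝ)).withDensity
        fun w => ENNReal.ofReal (gaussDensity μ Sig w)) =
      σ ^ 2 * ((Λ⁻¹ * Sig + 1).det) ^ (-(1 : ℝ) / 2) *
        Real.exp (-(1 / 2) * ((μ - c) ⬝ᵥ ((Λ + Sig)⁻¹ *ᵥ (μ - c)))) := by
  unfold seKernel
  rw [integral_const_mul, integral_withDensity_gaussDensity μ hSig,
    integral_gaussDensity_mul_exp hΛ hSig, mul_assoc]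

lemma integral_seKernel_mul {n : ℕ} {Λ Sig : Matrix (Fin n) (Fin n) ℝ}
    (hΛ : Λ.PosDef) (hSig : Sig.PosDef) (σ : ℝ) (μ a b : Fin n → ℝ) :
    ∫ w, seKernel σ Λ w a * seKernel σ Λ w b ∂((volume : Measure (Fin n → ℝ)).withDensity
        fun w => ENNReal.ofReal (gaussDensity μ Sig w)) =
      σ ^ 4 * (((2 : ℝ) • (Λ⁻¹ * Sig) + 1).det) ^ (-(1 : ℝ) / 2) *
        Real.exp (-(1 / 4) * ((a - b) ⬝ᵥ (Λ⁻¹ *ᵥ (a - b)))) *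
        Real.exp (-(1 / 2) * ((((1 / 2 : ℝ) • (a + b)) - μ) ⬝ᵥ
            (((2 : ℝ)⁻¹ • Λ + Sig)⁻¹ *ᵥ (((1 / 2 : ℝ) • (a + b)) - μ)))) := by
  have hΓ : ((2 : ℝ)⁻¹ • Λ).PosDef := hΛ.smul (by norm_num)
  have hneg : μ - (1 / 2 : ℝ) • (a + b) = -((1 / 2 : ℝ) • (a + b) - μ) := by abel
  simp only [seKernel_mul σ hΛ]
  rw [integral_const_mul, integral_withDensity_gaussDensity μ hSig,
    integral_gaussDensity_mul_exp hΓ hSig, inv_half_smul hΛ, Matrix.smul_mul, hneg,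
    Matrix.mulVec_neg, neg_dotProduct_neg]
  ring

/-! ### Moments of Gaussian mixtures -/

/-- First two moments of a Gaussian mixture (laws of total expectation and of total second moment).
Square integrability of `m` and integrability of `s` make both moments of the mixture finite, so
the Bochner integrals on the left are not junk values. -/
lemma mixture_moments {E : Type*} [MeasurableSpace E] (ν : Measure E) [IsProbabilityMeasure ν]
    {m s : E → ℝ} (hm : Measurable m) (hs : Measurable s) (hs0 : ∀ w, 0 ≤ s w)
    (hmi : Integrable (fun w => m w ^ 2) ν) (hsi : Integrable s ν) :
    ∫ z, z ∂(ν.bind fun w => gaussianReal (m w) (s w).toNNReal) = ∫ w, m w ∂ν ∧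
    ∫ z, z ^ 2 ∂(ν.bind fun w => gaussianReal (m w) (s w).toNNReal) =
      ∫ w, (s w + m w ^ 2) ∂ν := by
  let κ : Kernel E ℝ := ⟨fun w => gaussianReal (m w) (s w).toNNReal,
    measurable_gaussianReal.comp (hm.prodMk hs.real_toNNReal)⟩
  have hκ : ∀ w, κ w = gaussianReal (m w) (s w).toNNReal := fun _ => rfl
  have : IsMarkovKernel κ := ⟨fun w => by rw [hκ]; infer_instance⟩
  change ∫ z, z ∂(ν.bind κ) = _ ∧ ∫ z, z ^ 2 ∂(ν.bind κ) = _
  have hL2 : ∀ w, MemLp (fun z : ℝ => z) 2 (κ w) := fun w => memLp_id_gaussianReal' 2 (by simp)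
  have h2 : ∀ w, ∫ z, z ^ 2 ∂(κ w) = s w + m w ^ 2 := by
    intro w
    have hv := variance_eq_sub (hL2 w)
    have h1 : ∫ z, z ∂(κ w) = m w := integral_id_gaussianReal
    have h3 : Var[fun x ↦ x; κ w] = (s w).toNNReal := variance_fun_id_gaussianReal
    rw [h3, h1, Real.coe_toNNReal _ (hs0 w)] at hv
    simp only [Pi.pow_apply] at hv
    linarith
  have hi2 : Integrable (fun z : ℝ => z ^ 2) (ν.bind κ) := by
    rw [Measure.integrable_comp_iff (by fun_prop)]
    refine ⟨.of_forall fun w => (hL2 w).integrable_sq, ?_⟩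
    simp only [norm_pow, Real.norm_eq_abs, sq_abs, h2]
    exact hsi.add hmi
  have hprob : IsProbabilityMeasure (ν.bind κ) := inferInstance
  have hi1 : Integrable (fun z : ℝ => z) (ν.bind κ) :=
    ((memLp_two_iff_integrable_sq (by fun_prop)).2 hi2).integrable (by norm_num)
  have hbind : ∀ f : ℝ → ℝ, Integrable f (ν.bind κ) →
      ∫ z, f z ∂(ν.bind κ) = ∫ w, ∫ z, f z ∂(κ w) ∂ν := by
    intro f hf
    rw [Measure.comp_eq_comp_const_apply] at hf ⊢
    rw [Kernel.integral_comp hf, Kernel.const_apply]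
  constructor
  · rw [hbind _ hi1]
    exact integral_congr_ae (.of_forall fun w => integral_id_gaussianReal)
  · rw [hbind _ hi2]
    exact integral_congr_ae (.of_forall h2)

/-- Full closed-form moment-matching variance of the sparse GP prediction under a
Gaussian input `w ~ N(μ, Σ)`: the variance of the mixture of the conditionally
Gaussian outputs with mean `μ̆(w) = αᵀk(w)` and variance
`σ̆²(w) = σ² + σ_v² − k(w)ᵀ(K⁻¹ − S⁻¹)k(w)` equals
`σ² + σ_v² + αᵀLα − (αᵀl)² − Tr((K⁻¹ − S⁻¹)L)`. -/
theorem sparse_gp_mm_variance_mixture (n M N : ℕ)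
    (Λ Sig : Matrix (Fin n) (Fin n) ℝ) (hΛ : Λ.PosDef) (hSig : Sig.PosDef)
    (σ σv : ℝ) (hσ : 0 < σ) (hσv : 0 < σv) (μ : Fin n → ℝ)
    (wi : Fin M → Fin n → ℝ) (hwi : Function.Injective wi)
    (wt : Fin N → Fin n → ℝ) (α : Fin M → ℝ)
    (K : Matrix (Fin M) (Fin M) ℝ)
    (hK : ∀ τ τ' : Fin M, K τ τ' = seKernel σ Λ (wi τ) (wi τ') + (if τ = τ' then σv ^ 2 else 0))
    (B : Matrix (Fin M) (Fin N) ℝ)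
    (hB : ∀ (τ : Fin M) (m : Fin N), B τ m = seKernel σ Λ (wi τ) (wt m))
    (S : Matrix (Fin M) (Fin M) ℝ)
    (hS : S = K + (σv ^ 2)⁻¹ • (B * Bᵀ))
    (hKinv : IsUnit K.det) (hSinv : IsUnit S.det)
    (sv : (Fin n → ℝ) → ℝ)
    (hsv : ∀ w, sv w =
      σ ^ 2 + σv ^ 2 -
        (fun τ => seKernel σ Λ w (wi τ)) ⬝ᵥ ((K⁻¹ - S⁻¹) *ᵥ fun τ => seKernel σ Λ w (wi τ)))
    (hsvNonneg : ∀ w, 0 ≤ sv w)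
    (ν : Measure (Fin n → ℝ))
    (hν : ν = volume.withDensity fun w => ENNReal.ofReal (gaussDensity μ Sig w))
    (l : Fin M → ℝ)
    (hl : ∀ τ : Fin M, l τ =
      σ ^ 2 * ((Λ⁻¹ * Sig + 1).det) ^ (-(1 : ℝ) / 2) *
        Real.exp (-(1 / 2) * ((μ - wi τ) ⬝ᵥ ((Λ + Sig)⁻¹ *ᵥ (μ - wi τ)))))
    (L : Matrix (Fin M) (Fin M) ℝ)
    (hL : ∀ τ τ' : Fin M, L τ τ' =
      σ ^ 4 * (((2 : ℝ) • (Λ⁻¹ * Sig) + 1).det) ^ (-(1 : ℝ) / 2) *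
        Real.exp (-(1 / 4) * ((wi τ - wi τ') ⬝ᵥ (Λ⁻¹ *ᵥ (wi τ - wi τ')))) *
        Real.exp (-(1 / 2) *
          ((((1 / 2 : ℝ) • (wi τ + wi τ')) - μ) ⬝ᵥ
            (((2 : ℝ)⁻¹ • Λ + Sig)⁻¹ *ᵥ (((1 / 2 : ℝ) • (wi τ + wi τ')) - μ)))))
    (η : Measure ℝ)
    (hη : η = ν.bind fun w =>
      gaussianReal (α ⬝ᵥ fun τ => seKernel σ Λ w (wi τ)) (sv w).toNNReal) :
    (∫ z, z ^ 2 ∂η) - (∫ z, z ∂η) ^ 2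
      = σ ^ 2 + σv ^ 2 + α ⬝ᵥ (L *ᵥ α) - (α ⬝ᵥ l) ^ 2 -
          Matrix.trace ((K⁻¹ - S⁻¹) * L) := by
  have hprob : IsProbabilityMeasure ν := hν ▸ isProbabilityMeasure_withDensity_gaussDensity μ hSig
  have hkc : ∀ τ, Continuous fun w => seKernel σ Λ w (wi τ) :=
    fun τ => continuous_seKernel σ Λ (wi τ)
  -- The kernel slices are bounded, so all their products are integrable against the probability `ν`.
  have hkb : ∀ τ w, ‖seKernel σ Λ w (wi τ)‖ ≤ σ ^ 2 := fun τ w => by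
    rw [Real.norm_of_nonneg (seKernel_nonneg _ _ _ _)]
    exact seKernel_le σ hΛ _ _
  have hki : ∀ τ, Integrable (fun w => seKernel σ Λ w (wi τ)) ν := fun τ =>
    .of_bound (hkc τ).aestronglyMeasurable (σ ^ 2) (.of_forall (hkb τ))
  have hkki : ∀ τ τ', Integrable (fun w => seKernel σ Λ w (wi τ) * seKernel σ Λ w (wi τ')) ν :=
    fun τ τ' => (hki τ').bdd_mul (hkc τ).aestronglyMeasurable (.of_forall (hkb τ))
  have hkl : ∀ τ, ∫ w, seKernel σ Λ w (wi τ) ∂ν = l τ := fun τ => by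
    rw [hl, hν, integral_seKernel hΛ hSig]
  have hkL : ∀ τ τ', ∫ w, seKernel σ Λ w (wi τ) * seKernel σ Λ w (wi τ') ∂ν = L τ τ' :=
    fun τ τ' => by rw [hL, hν, integral_seKernel_mul hΛ hSig]
  -- The indices are arranged as `k j * k i` so that integration gives `∑ D i j * L j i`, the trace,
  -- with no appeal to the symmetry of `L`.
  have hsv' : ∀ w, sv w = σ ^ 2 + σv ^ 2 - ∑ i, ∑ j,
      (K⁻¹ - S⁻¹) i j * (seKernel σ Λ w (wi j) * seKernel σ Λ w (wi i)) := by
    intro w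
    rw [hsv]
    simp only [dotProduct, mulVec, Finset.mul_sum]
    congr 1
    exact Finset.sum_congr rfl fun i _ => Finset.sum_congr rfl fun j _ => by ring
  have hm2 : ∀ w, (α ⬝ᵥ fun τ => seKernel σ Λ w (wi τ)) ^ 2 = ∑ i, ∑ j,
      (α i * α j) * (seKernel σ Λ w (wi i) * seKernel σ Λ w (wi j)) := by
    intro w
    simp only [dotProduct, sq, Finset.sum_mul_sum]
    exact Finset.sum_congr rfl fun i _ => Finset.sum_congr rfl fun j _ => by ring
  have hDi : Integrable (fun w => ∑ i, ∑ j,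
      (K⁻¹ - S⁻¹) i j * (seKernel σ Λ w (wi j) * seKernel σ Λ w (wi i))) ν :=
    integrable_finsetSum _ fun i _ => integrable_finsetSum _ fun j _ => (hkki j i).const_mul _
  have hsvi : Integrable sv ν := by
    rw [funext hsv']
    exact (integrable_const _).sub hDi
  have hmi : Integrable (fun w => (α ⬝ᵥ fun τ => seKernel σ Λ w (wi τ)) ^ 2) ν := by
    simp only [hm2]
    exact integrable_finsetSum _ fun i _ => integrable_finsetSum _ fun j _ =>
      (hkki i j).const_mul _
  have hmm : Measurable fun w => α ⬝ᵥ fun τ => seKernel σ Λ w (wi τ) := by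
    unfold dotProduct
    exact (continuous_finsetSum _ fun τ _ => continuous_const.mul (hkc τ)).measurable
  have hsvm : Measurable sv := by
    rw [funext hsv']
    exact (continuous_const.sub (continuous_finsetSum _ fun i _ => continuous_finsetSum _ fun j _ =>
      continuous_const.mul ((hkc j).mul (hkc i)))).measurable
  obtain ⟨h1, h2⟩ := mixture_moments ν hmm hsvm hsvNonneg hmi hsvi
  have hmean : ∫ w, (α ⬝ᵥ fun τ => seKernel σ Λ w (wi τ)) ∂ν = α ⬝ᵥ l := by
    unfold dotProduct
    rw [integral_finsetSum _ fun τ _ => (hki τ).const_mul _]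
    simp only [integral_const_mul, hkl]
  have hmsq : ∫ w, (α ⬝ᵥ fun τ => seKernel σ Λ w (wi τ)) ^ 2 ∂ν = α ⬝ᵥ (L *ᵥ α) := by
    simp only [hm2]
    rw [integral_finsetSum _ fun i _ => integrable_finsetSum _ fun j _ => (hkki i j).const_mul _]
    simp only [dotProduct, mulVec, Finset.mul_sum]
    refine Finset.sum_congr rfl fun i _ => ?_
    rw [integral_finsetSum _ fun j _ => (hkki i j).const_mul _]
    refine Finset.sum_congr rfl fun j _ => ?_
    rw [integral_const_mul, hkL]
    ring
  have hvar : ∫ w, sv w ∂ν = σ ^ 2 + σv ^ 2 - Matrix.trace ((K⁻¹ - S⁻¹) * L) := by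
    simp only [hsv']
    rw [integral_sub (integrable_const _) hDi, integral_const, probReal_univ, one_smul]
    congr 1
    simp only [Matrix.trace, Matrix.diag, Matrix.mul_apply]
    refine (integral_finsetSum _ fun i _ => integrable_finsetSum _ fun j _ =>
      (hkki j i).const_mul _).trans (Finset.sum_congr rfl fun i _ => ?_)
    refine (integral_finsetSum _ fun j _ =>
      (hkki j i).const_mul _).trans (Finset.sum_congr rfl fun j _ => ?_)
    rw [integral_const_mul, hkL]
  rw [hη, h1, h2, integral_add hsvi hmi, hmean, hmsq, hvar]
  ring
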